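/- Let β > 0 and P_w, P_l, R_w, R_l > 0 be real numbers with P_w > P_l. Let d_w be the derivative at P_w of P ↦ −log σ(β·log(P/R_w) − β·log(P_l/R_l)), and let d_l be the derivative at P_l of P ↦ −log σ(β·log(P_w/R_w) − β·log(P/R_l)). Then |d_w| < |d_l|; that is, once the policy assigns a larger probability to the preferred response than to the dispreferred one, DPO suppresses the dispreferred probability strictly faster than it promotes the preferred one. -/

import Mathlib

/-!
Write `t` for the log-ratio margin at the given data. Since `-log σ` has derivative `-σ(-t)` at `t`
(`hasDerivAt_neg_log_sigmoid`), and `P ↦ β log (P / R)` has derivative `β / P`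
(`hasDerivAt_mul_log_div`), the chain rule gives `|d_w| = σ(-t) β / P_w` and
`|d_l| = σ(-t) β / P_l`: both derivatives are taken at the same margin, so they share the
positive factor `σ(-t) β` and only the reciprocals of the probabilities differ.
-/

/-- The logistic sigmoid σ(t) = 1/(1 + exp(−t)). -/
noncomputable def sigmoid (t : ℝ) : ℝ := 1 / (1 + Real.exp (-t))

theorem sigmoid_pos' (t : ℝ) : 0 < sigmoid t := by
  unfold sigmoid
  positivity

/-- Holds because `-log (σ x) = log (1 + exp (-x))`. -/
theorem hasDerivAt_neg_log_sigmoid (t : ℝ) :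
    HasDerivAt (fun x : ℝ => -Real.log (sigmoid x)) (-sigmoid (-t)) t := by
  have heq : (fun x : ℝ => -Real.log (sigmoid x)) = fun x => Real.log (1 + Real.exp (-x)) := by
    funext x
    simp [sigmoid]
  have h : HasDerivAt (fun x : ℝ => Real.log (1 + Real.exp (-x)))
      (Real.exp (-t) * (-1) / (1 + Real.exp (-t))) t :=
    (((hasDerivAt_neg t).exp).const_add 1).log (by positivity)
  rw [heq]
  convert h using 1
  simp only [sigmoid, neg_neg]
  have he : Real.exp t * Real.exp (-t) = 1 := by rw [← Real.exp_add]; simp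
  have h1 : (1 + Real.exp t) ≠ 0 := by positivity
  have h2 : (1 + Real.exp (-t)) ≠ 0 := by positivity
  field_simp
  linear_combination he

theorem hasDerivAt_mul_log_div (β : ℝ) {P R : ℝ} (hP : 0 < P) (hR : 0 < R) :
    HasDerivAt (fun x : ℝ => β * Real.log (x / R)) (β / P) P := by
  have h := (((hasDerivAt_id P).div_const R).log (div_pos hP hR).ne').const_mul β
  have e : β / P = β * (1 / R / (P / R)) := by field_simp
  rw [e]
  exact h

/-- once `P_w > P_l`, DPO suppresses the dispreferred probability
strictly faster than it promotes the preferred one. -/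
theorem dpo_policy_gradient_imbalance (β Pw Pl Rw Rl : ℝ) (hβ : 0 < β)
    (hPw : 0 < Pw) (hPl : 0 < Pl) (hRw : 0 < Rw) (hRl : 0 < Rl) (hlt : Pl < Pw) :
    |deriv (fun P : ℝ =>
        -Real.log (sigmoid (β * Real.log (P / Rw) - β * Real.log (Pl / Rl)))) Pw| <
    |deriv (fun P : ℝ =>
        -Real.log (sigmoid (β * Real.log (Pw / Rw) - β * Real.log (P / Rl)))) Pl| := by
  have hw := (hasDerivAt_neg_log_sigmoid _).comp Pw
    ((hasDerivAt_mul_log_div β hPw hRw).sub_const (β * Real.log (Pl / Rl)))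
  have hl := (hasDerivAt_neg_log_sigmoid _).comp Pl
    ((hasDerivAt_mul_log_div β hPl hRl).const_sub (β * Real.log (Pw / Rw)))
  simp only [Function.comp_def] at hw hl
  rw [hw.deriv, hl.deriv]
  set s := sigmoid (-(β * Real.log (Pw / Rw) - β * Real.log (Pl / Rl)))
  have hs : 0 < s := sigmoid_pos' _
  rw [neg_mul, abs_neg, neg_mul_neg, abs_of_pos (by positivity), abs_of_pos (by positivity)]
  gcongr
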